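/- Let Q be a finite quiver, s a positive integer, and N_s(Q) the nilpotent quiver algebra over a field k. Then the global dimension of N_s(Q) is at most 2. -/

import Mathlib

noncomputable section

open Function

/-- A finite quiver: finitely many vertices and arrows, with source and target maps. -/
structure FinQuiver where
  V : Type
  E : Type
  [fintypeV : Fintype V]
  [fintypeE : Fintype E]
  [decV : DecidableEq V]
  src : E → V
  tgt : E → V

attribute [instance] FinQuiver.fintypeV FinQuiver.fintypeE FinQuiver.decV

/-- Generators of the staircase quiver `Q^(s)` (0-based layers `0,…,s-1`):
trivial paths `e(i_t)`, vertical arrows `b(i_t) : i_t → i_{t+1}` and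
diagonal arrows `a_{t} : i_{t+1} → j_t` for each arrow `a : i → j` of `Q`. -/
inductive SGen (Q : FinQuiver) (s : ℕ) : Type
  | idem (i : Q.V) (t : Fin s) : SGen Q s
  | vert (i : Q.V) (t : ℕ) (h : t + 1 < s) : SGen Q s
  | diag (a : Q.E) (t : ℕ) (h : t + 1 < s) : SGen Q s

variable (k : Type) [Field k]

namespace SGen

variable {Q : FinQuiver} {s : ℕ}

end SGen

section NsQ

variable (Q : FinQuiver) (s : ℕ)

open FreeAlgebra

/-- The relations defining the nilpotent quiver algebra `N_s(Q)` as a quotient of the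
free algebra on the generators of the staircase quiver: orthogonal idempotent relations
for the trivial paths, source/target relations for the arrows, and the mesh relations
(R1) `a_{t+1} b(i_t) = b(j_{t-1}) a_t` and (R2) `a_2 b(i_1) = 0`. -/
inductive NsRel : FreeAlgebra k (SGen Q s) → FreeAlgebra k (SGen Q s) → Prop
  | idem_mul (i j : Q.V) (t u : Fin s) :
      NsRel (ι k (SGen.idem i t) * ι k (SGen.idem j u))
        (if i = j ∧ t = u then ι k (SGen.idem i t) else 0)
  | one_def : NsRel (∑ i : Q.V, ∑ t : Fin s, ι k (SGen.idem i t)) 1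
  | vert_comp (i : Q.V) (t : ℕ) (h : t + 1 < s) :
      NsRel (ι k (SGen.vert i t h))
        (ι k (SGen.idem i ⟨t + 1, h⟩) * ι k (SGen.vert i t h) *
          ι k (SGen.idem i ⟨t, Nat.lt_of_succ_lt h⟩))
  | diag_comp (a : Q.E) (t : ℕ) (h : t + 1 < s) :
      NsRel (ι k (SGen.diag a t h))
        (ι k (SGen.idem (Q.tgt a) ⟨t, Nat.lt_of_succ_lt h⟩) * ι k (SGen.diag a t h) *
          ι k (SGen.idem (Q.src a) ⟨t + 1, h⟩))
  | mesh (a : Q.E) (t : ℕ) (h : t + 2 < s) :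
      NsRel (ι k (SGen.diag a (t + 1) h) * ι k (SGen.vert (Q.src a) (t + 1) h))
        (ι k (SGen.vert (Q.tgt a) t (by omega)) * ι k (SGen.diag a t (by omega)))
  | mesh0 (a : Q.E) (h : 0 + 1 < s) :
      NsRel (ι k (SGen.diag a 0 h) * ι k (SGen.vert (Q.src a) 0 h)) 0

/-- The nilpotent quiver algebra `N_s(Q)`. -/
def NsQ : Type := RingQuot (NsRel k Q s)

instance : Ring (NsQ k Q s) := by unfold NsQ; infer_instance
instance : Algebra k (NsQ k Q s) := by unfold NsQ; infer_instance

/-- Quotient map onto `N_s(Q)`. -/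
def nmk : FreeAlgebra k (SGen Q s) →ₐ[k] NsQ k Q s := RingQuot.mkAlgHom k (NsRel k Q s)

/-- The trivial path `e(i_t)` as an element of `N_s(Q)` (`0` for out of range `t`). -/
def eV (i : Q.V) (t : ℕ) : NsQ k Q s :=
  if h : t < s then nmk k Q s (FreeAlgebra.ι k (SGen.idem i ⟨t, h⟩)) else 0

/-- The vertical arrow `b(i_t) : i_t → i_{t+1}` in `N_s(Q)` (`0` for out of range `t`). -/
def bV (i : Q.V) (t : ℕ) : NsQ k Q s :=
  if h : t + 1 < s then nmk k Q s (FreeAlgebra.ι k (SGen.vert i t h)) else 0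

/-- The diagonal arrow `a_t : i_{t+1} → j_t` in `N_s(Q)` (`0` for out of range `t`). -/
def aV (a : Q.E) (t : ℕ) : NsQ k Q s :=
  if h : t + 1 < s then nmk k Q s (FreeAlgebra.ι k (SGen.diag a t h)) else 0

/-- The sum `e_t` of the idempotents of layer `t`. -/
def Elayer (t : ℕ) : NsQ k Q s := ∑ i : Q.V, eV k Q s i t

/-- The idempotent `e` of the top layer. -/
def Etop : NsQ k Q s := Elayer k Q s (s - 1)

/-- The path of vertical arrows `b(i_{q-1}) ⋯ b(i_t) : i_t → i_q` in `N_s(Q)`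
(the trivial path when `q ≤ t`). -/
def bChain (i : Q.V) (t : ℕ) : ℕ → NsQ k Q s
  | 0 => eV k Q s i 0
  | q + 1 => if q + 1 ≤ t then eV k Q s i (q + 1) else bV k Q s i q * bChain i t q

end NsQ

section PathAlg

variable (Q : FinQuiver)

/-- Generators of the path algebra `kQ`: trivial paths and arrows. -/
inductive PGen (Q : FinQuiver) : Type
  | idem (i : Q.V) : PGen Q
  | arr (a : Q.E) : PGen Q

open FreeAlgebra

/-- The relations of the path algebra `kQ`. -/
inductive PRel : FreeAlgebra k (PGen Q) → FreeAlgebra k (PGen Q) → Prop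
  | idem_mul (i j : Q.V) :
      PRel (ι k (PGen.idem i) * ι k (PGen.idem j)) (if i = j then ι k (PGen.idem i) else 0)
  | one_def : PRel (∑ i : Q.V, ι k (PGen.idem i)) 1
  | arr_comp (a : Q.E) :
      PRel (ι k (PGen.arr a))
        (ι k (PGen.idem (Q.tgt a)) * ι k (PGen.arr a) * ι k (PGen.idem (Q.src a)))

/-- The path algebra `kQ`. -/
def PathAlg : Type := RingQuot (PRel k Q)

instance : Ring (PathAlg k Q) := by unfold PathAlg; infer_instance
instance : Algebra k (PathAlg k Q) := by unfold PathAlg; infer_instance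

/-- The arrow `a` as an element of the path algebra. -/
def arrP (a : Q.E) : PathAlg k Q := RingQuot.mkAlgHom k (PRel k Q) (ι k (PGen.arr a))

/-- The trivial path `e_i` as an element of the path algebra. -/
def idemP (i : Q.V) : PathAlg k Q := RingQuot.mkAlgHom k (PRel k Q) (ι k (PGen.idem i))

/-- The arrow ideal `J` of `kQ` raised to the power `t`, as the `k`-subspace spanned by
the paths containing at least `t` arrows. -/
def JPow (t : ℕ) : Submodule k (PathAlg k Q) :=
  Submodule.span k {x : PathAlg k Q | ∃ (u v : PathAlg k Q) (l : List Q.E),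
    l.length = t ∧ x = u * (l.map (arrP k Q)).prod * v}

end PathAlg

end

noncomputable section Proof

namespace NsProof

variable {k : Type} [Field k] {Q : FinQuiver} {s : ℕ}

/-- image of a generator -/
def gen (x : SGen Q s) : NsQ k Q s := nmk k Q s (FreeAlgebra.ι k x)

lemma rel_eq {x y : FreeAlgebra k (SGen Q s)} (h : NsRel k Q s x y) :
    nmk k Q s x = nmk k Q s y := RingQuot.mkAlgHom_rel k h

lemma nmk_surj : Function.Surjective (nmk k Q s) := RingQuot.mkAlgHom_surjective k _

lemma eV_of {i : Q.V} {t : ℕ} (h : t < s) : eV k Q s i t = gen (SGen.idem i ⟨t, h⟩) := by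
  simp [eV, gen, h]

lemma bV_of {i : Q.V} {t : ℕ} (h : t + 1 < s) : bV k Q s i t = gen (SGen.vert i t h) := by
  simp [bV, gen, h]

lemma aV_of {a : Q.E} {t : ℕ} (h : t + 1 < s) : aV k Q s a t = gen (SGen.diag a t h) := by
  simp [aV, gen, h]

lemma gen_idem (i : Q.V) (t : Fin s) :
    (gen (SGen.idem i t) : NsQ k Q s) = eV k Q s i t := by
  rw [eV_of t.2]

lemma eV_mul_self (i : Q.V) (t : ℕ) : eV k Q s i t * eV k Q s i t = eV k Q s i t := by
  by_cases h : t < s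
  · have := rel_eq (NsRel.idem_mul (k := k) i i ⟨t, h⟩ ⟨t, h⟩)
    simpa [eV_of h, gen] using this
  · simp [eV, h]

lemma eV_mul_ne {i j : Q.V} {t u : ℕ} (hne : ¬ (i = j ∧ t = u)) :
    eV k Q s i t * eV k Q s j u = 0 := by
  by_cases h : t < s
  · by_cases h' : u < s
    · have := rel_eq (NsRel.idem_mul (k := k) i j ⟨t, h⟩ ⟨u, h'⟩)
      rw [if_neg (by simpa using hne)] at this
      simpa [eV_of h, eV_of h', gen] using this
    · simp [eV, h']
  · simp [eV, h]

lemma sum_eV : ∑ p : Q.V × Fin s, eV k Q s p.1 p.2 = 1 := by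
  have := rel_eq (NsRel.one_def (k := k) (Q := Q) (s := s))
  rw [Fintype.sum_prod_type]
  simpa [eV] using this

lemma e_bV (i : Q.V) (t : ℕ) : eV k Q s i (t+1) * bV k Q s i t = bV k Q s i t := by
  by_cases h : t + 1 < s
  · have := rel_eq (NsRel.vert_comp (k := k) i t h)
    have h2 : bV k Q s i t = eV k Q s i (t+1) * bV k Q s i t * eV k Q s i t := by
      rw [eV_of h, eV_of (by omega : t < s), bV_of h]; simpa [gen] using this
    rw [h2, ← mul_assoc, ← mul_assoc, eV_mul_self]
  · simp [bV, h]

lemma bV_e (i : Q.V) (t : ℕ) : bV k Q s i t * eV k Q s i t = bV k Q s i t := by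
  by_cases h : t + 1 < s
  · have := rel_eq (NsRel.vert_comp (k := k) i t h)
    have h2 : bV k Q s i t = eV k Q s i (t+1) * bV k Q s i t * eV k Q s i t := by
      rw [eV_of h, eV_of (by omega : t < s), bV_of h]; simpa [gen] using this
    rw [h2, mul_assoc, eV_mul_self]
  · simp [bV, h]

lemma e_aV (a : Q.E) (t : ℕ) : eV k Q s (Q.tgt a) t * aV k Q s a t = aV k Q s a t := by
  by_cases h : t + 1 < s
  · have := rel_eq (NsRel.diag_comp (k := k) a t h)
    have h2 : aV k Q s a t = eV k Q s (Q.tgt a) t * aV k Q s a t * eV k Q s (Q.src a) (t+1) := by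
      rw [eV_of h, eV_of (by omega : t < s), aV_of h]; simpa [gen] using this
    rw [h2, ← mul_assoc, ← mul_assoc, eV_mul_self]
  · simp [aV, h]

lemma aV_e (a : Q.E) (t : ℕ) : aV k Q s a t * eV k Q s (Q.src a) (t+1) = aV k Q s a t := by
  by_cases h : t + 1 < s
  · have := rel_eq (NsRel.diag_comp (k := k) a t h)
    have h2 : aV k Q s a t = eV k Q s (Q.tgt a) t * aV k Q s a t * eV k Q s (Q.src a) (t+1) := by
      rw [eV_of h, eV_of (by omega : t < s), aV_of h]; simpa [gen] using this
    rw [h2, mul_assoc, eV_mul_self]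
  · simp [aV, h]

lemma mesh_V (a : Q.E) (t : ℕ) (h : t + 2 < s) :
    aV k Q s a (t+1) * bV k Q s (Q.src a) (t+1) = bV k Q s (Q.tgt a) t * aV k Q s a t := by
  have := rel_eq (NsRel.mesh (k := k) a t h)
  rw [aV_of (by omega : t + 1 + 1 < s), bV_of (by omega : t + 1 + 1 < s),
    aV_of (by omega : t + 1 < s), bV_of (by omega : t + 1 < s)]
  simpa [gen] using this

lemma mesh0_V (a : Q.E) : aV k Q s a 0 * bV k Q s (Q.src a) 0 = 0 := by
  by_cases h : 0 + 1 < s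
  · have := rel_eq (NsRel.mesh0 (k := k) a h)
    rw [aV_of h, bV_of h]
    simpa [gen] using this
  · simp only [aV, dif_neg h, zero_mul]

lemma msmulR {R X : Type} [Ring R] [AddCommGroup X] [Module R X] (a b : R) (x : X) :
    (a * b) • x = a • b • x := mul_smul a b x

lemma msmul {X : Type} [AddCommGroup X] [Module (NsQ k Q s) X] (a b : NsQ k Q s) (x : X) :
    (a * b) • x = a • b • x := msmulR a b x

section Lin
variable {X Y : Type} [AddCommGroup X] [Module k X] [Module (NsQ k Q s) X]
  [IsScalarTower k (NsQ k Q s) X] [AddCommGroup Y] [Module k Y] [Module (NsQ k Q s) Y]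
  [IsScalarTower k (NsQ k Q s) Y]

/-- a `k`-linear map commuting with generators is linear over the algebra -/
def mkLin (h : X →ₗ[k] Y)
    (hg : ∀ (g : SGen Q s) (x : X),
      h ((gen g : NsQ k Q s) • x) = (gen g : NsQ k Q s) • h x) : X →ₗ[NsQ k Q s] Y where
  toFun := h
  map_add' := map_add h
  map_smul' := by
    intro r x
    obtain ⟨r, rfl⟩ := nmk_surj r
    simp only [RingHom.id_apply]
    induction r using FreeAlgebra.induction generalizing x with
    | grade0 c =>
      rw [AlgHom.commutes, algebraMap_smul, algebraMap_smul, map_smul]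
    | grade1 g => exact hg g x
    | mul a b ha hb => rw [map_mul, msmul, msmul, ha, hb]
    | add a b ha hb => rw [map_add, add_smul, add_smul, map_add, ha, hb]

@[simp] lemma mkLin_apply (h : X →ₗ[k] Y) (hg) (x : X) :
    mkLin (k := k) (Q := Q) (s := s) h hg x = h x := rfl

end Lin

/-- representations of the diagonal part of the staircase quiver -/
structure CRep (k : Type) [Field k] (Q : FinQuiver) where
  N : Q.V → ℕ → Type
  [acg : ∀ i t, AddCommGroup (N i t)]
  [mod : ∀ i t, Module k (N i t)]
  d : ∀ (a : Q.E) (t : ℕ), N (Q.src a) (t+1) →ₗ[k] N (Q.tgt a) t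

attribute [instance] CRep.acg CRep.mod

/-- families supported in layers at most `t` -/
def Fil (N : CRep k Q) (i : Q.V) (t : ℕ) : Submodule k (∀ u, N.N i u) where
  carrier := {f | ∀ u, t < u → f u = 0}
  add_mem' := by
    intro f g hf hg u hu
    simp [hf u hu, hg u hu]
  zero_mem' := by intro u _; rfl
  smul_mem' := by
    intro c f hf u hu
    simp [hf u hu]

/-- the inclusion of filtration steps -/
def filB (N : CRep k Q) (i : Q.V) (t : ℕ) : Fil N i t →ₗ[k] Fil N i (t+1) where
  toFun f := ⟨f.1, fun u hu => f.2 u (by omega)⟩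
  map_add' _ _ := rfl
  map_smul' _ _ := rfl

/-- the shifted differential on families -/
def famD (N : CRep k Q) (a : Q.E) : (∀ u, N.N (Q.src a) u) →ₗ[k] (∀ u, N.N (Q.tgt a) u) where
  toFun f u := N.d a u (f (u+1))
  map_add' f g := by ext u; simp
  map_smul' c f := by ext u; simp

def filD (N : CRep k Q) (a : Q.E) (t : ℕ) : Fil N (Q.src a) (t+1) →ₗ[k] Fil N (Q.tgt a) t where
  toFun f := ⟨famD N a f.1, fun u hu => by
    have := f.2 (u+1) (by omega)
    simp [famD, this]⟩
  map_add' f g := by ext u; simp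
  map_smul' c f := by ext u; simp

/-- the induced module -/
def FT (s : ℕ) (N : CRep k Q) : Type := ∀ p : Q.V × Fin s, Fil N p.1 p.2

instance (N : CRep k Q) : AddCommGroup (FT s N) :=
  inferInstanceAs (AddCommGroup (∀ p : Q.V × Fin s, Fil N p.1 p.2))
instance (N : CRep k Q) : Module k (FT s N) :=
  inferInstanceAs (Module k (∀ p : Q.V × Fin s, Fil N p.1 p.2))

def ins (N : CRep k Q) (i : Q.V) (t : ℕ) (h : t < s) : Fil N i t →ₗ[k] FT s N :=
  LinearMap.single k (fun p : Q.V × Fin s => Fil N p.1 p.2) (i, ⟨t, h⟩)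

def prj (N : CRep k Q) (i : Q.V) (t : ℕ) (h : t < s) : FT s N →ₗ[k] Fil N i t :=
  LinearMap.proj (φ := fun p : Q.V × Fin s => Fil N p.1 p.2) (i, ⟨t, h⟩)

@[simp] lemma prj_ins (N : CRep k Q) (i : Q.V) (t : ℕ) (h : t < s) (x) :
    prj N i t h (ins N i t h x) = x :=
  Pi.single_eq_same (M := fun p : Q.V × Fin s => Fil N p.1 p.2) (i, ⟨t, h⟩) x

lemma prj_ins_ne (N : CRep k Q) {i j : Q.V} {t u : ℕ} {h : t < s} {h' : u < s}
    (hne : ¬ (i = j ∧ t = u)) (x) :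
    prj N i t h (ins N j u h' x) = 0 :=
  Pi.single_eq_of_ne (M := fun p : Q.V × Fin s => Fil N p.1 p.2)
    (i := (j, ⟨u, h'⟩)) (i' := (i, ⟨t, h⟩)) (by simpa using hne) x

lemma sum_ins_prj (N : CRep k Q) (f : FT s N) :
    ∑ p : Q.V × Fin s, ins N p.1 p.2 p.2.2 (prj N p.1 p.2 p.2.2 f) = f := by
  exact Finset.univ_sum_single (f : ∀ p : Q.V × Fin s, Fil N p.1 p.2)

lemma FT_ext {N : CRep k Q} {f g : FT s N} (h : ∀ i t ht, prj N i t ht f = prj N i t ht g) :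
    f = g :=
  funext fun p => h p.1 p.2 p.2.2

/-- action of generators -/
def opF (N : CRep k Q) : SGen Q s → Module.End k (FT s N)
  | SGen.idem i t => ins N i t t.2 ∘ₗ prj N i t t.2
  | SGen.vert i t h => ins N i (t+1) h ∘ₗ filB N i t ∘ₗ prj N i t (Nat.lt_of_succ_lt h)
  | SGen.diag a t h => ins N (Q.tgt a) t (Nat.lt_of_succ_lt h) ∘ₗ filD N a t ∘ₗ
      prj N (Q.src a) (t+1) h

lemma filDB0 (N : CRep k Q) (a : Q.E) (f) : filD N a 0 (filB N (Q.src a) 0 f) = 0 := by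
  ext u
  have : f.1 (u+1) = 0 := f.2 (u+1) (by simp)
  change N.d a u (f.1 (u+1)) = 0
  rw [this, map_zero]

lemma filDB (N : CRep k Q) (a : Q.E) (t : ℕ) (f) :
    filD N a (t+1) (filB N (Q.src a) (t+1) f) = filB N (Q.tgt a) t (filD N a t f) := rfl

def actF (N : CRep k Q) : NsQ k Q s →ₐ[k] Module.End k (FT s N) :=
  RingQuot.liftAlgHom k ⟨FreeAlgebra.lift k (opF N), by
    intro x y h
    induction h with
    | idem_mul i j t u =>
      split_ifs with hh
      · obtain ⟨rfl, rfl⟩ := hh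
        ext1 f
        simp [opF]
      · ext1 f
        have : ¬ (i = j ∧ (t : ℕ) = u) := by simpa [Fin.ext_iff] using hh
        simp [opF, prj_ins_ne N this]
    | one_def =>
      ext1 f
      have := sum_ins_prj N f
      rw [Fintype.sum_prod_type] at this
      simpa [opF] using this
    | vert_comp i t h => ext1 f; simp [opF]
    | diag_comp a t h => ext1 f; simp [opF]
    | mesh a t h =>
      ext1 f
      simp [opF, filDB]
    | mesh0 a h =>
      ext1 f
      simp [opF, filDB0]⟩

instance (N : CRep k Q) : Module (NsQ k Q s) (FT s N) := Module.compHom _ (actF N).toRingHom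

lemma smul_def' (N : CRep k Q) (x : NsQ k Q s) (f : FT s N) : x • f = actF N x f := rfl

instance (N : CRep k Q) : IsScalarTower k (NsQ k Q s) (FT s N) where
  smul_assoc c x f := by simp [smul_def']

lemma gen_smul (N : CRep k Q) (g : SGen Q s) (f : FT s N) :
    (gen g : NsQ k Q s) • f = opF N g f := by
  rw [smul_def', gen, actF, nmk]
  erw [RingQuot.liftAlgHom_mkAlgHom_apply]
  simp

lemma eV_smul_F (N : CRep k Q) {i : Q.V} {t : ℕ} (h : t < s) (f : FT s N) :
    eV k Q s i t • f = ins N i t h (prj N i t h f) := by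
  rw [eV_of h, gen_smul]; rfl

lemma bV_smul_F (N : CRep k Q) {i : Q.V} {t : ℕ} (h : t + 1 < s) (f : FT s N) :
    bV k Q s i t • f =
      ins N i (t+1) h (filB N i t (prj N i t (Nat.lt_of_succ_lt h) f)) := by
  rw [bV_of h, gen_smul]; rfl

lemma aV_smul_F (N : CRep k Q) {a : Q.E} {t : ℕ} (h : t + 1 < s) (f : FT s N) :
    aV k Q s a t • f =
      ins N (Q.tgt a) t (Nat.lt_of_succ_lt h) (filD N a t (prj N (Q.src a) (t+1) h f)) := by
  rw [aV_of h, gen_smul]; rfl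

section Adj
variable {X Y : Type} [AddCommGroup X] [Module k X] [Module (NsQ k Q s) X]
  [IsScalarTower k (NsQ k Q s) X] [AddCommGroup Y] [Module k Y] [Module (NsQ k Q s) Y]
  [IsScalarTower k (NsQ k Q s) Y]

/-- A linear map commuting with all three kinds of arrows. -/
def mkLin3 (h : X →ₗ[k] Y)
    (he : ∀ i t, t < s → ∀ x, h (eV k Q s i t • x) = eV k Q s i t • h x)
    (hb : ∀ i t, t + 1 < s → ∀ x, h (bV k Q s i t • x) = bV k Q s i t • h x)
    (ha : ∀ a t, t + 1 < s → ∀ x, h (aV k Q s a t • x) = aV k Q s a t • h x) :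
    X →ₗ[NsQ k Q s] Y :=
  mkLin h (by
    intro g x
    cases g with
    | idem i t => rw [gen_idem]; exact he i t t.2 x
    | vert i t hh => rw [← bV_of hh]; exact hb i t hh x
    | diag a t hh => rw [← aV_of hh]; exact ha a t hh x)

@[simp] lemma mkLin3_apply (h : X →ₗ[k] Y) (he) (hb) (ha) (x : X) :
    mkLin3 (k := k) (Q := Q) (s := s) h he hb ha x = h x := rfl

/-- scalar multiplication as a `k`-linear map -/
def lsm (X : Type) [AddCommGroup X] [Module k X] [Module (NsQ k Q s) X]
    [IsScalarTower k (NsQ k Q s) X] (r : NsQ k Q s) : X →ₗ[k] X := Algebra.lsmul k k X r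

@[simp] lemma lsm_apply (r : NsQ k Q s) (x : X) : lsm X r x = r • x := rfl

/-- a morphism from a `C`-representation to a module -/
structure IsAdj (s : ℕ) {X : Type} [AddCommGroup X] [Module k X] [Module (NsQ k Q s) X]
    (N : CRep k Q) (σ : ∀ i t, N.N i t →ₗ[k] X) : Prop where
  he : ∀ i t, t < s → ∀ n, eV k Q s i t • σ i t n = σ i t n
  hd : ∀ a t, t + 1 < s → ∀ n, aV k Q s a t • σ (Q.src a) (t+1) n = σ (Q.tgt a) t (N.d a t n)

def phi (s : ℕ) {X : Type} [AddCommGroup X] [Module k X] [Module (NsQ k Q s) X]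
    [IsScalarTower k (NsQ k Q s) X]
    (N : CRep k Q) (σ : ∀ i t, N.N i t →ₗ[k] X) (i : Q.V) : ℕ → (∀ u, N.N i u) →ₗ[k] X
  | 0 => σ i 0 ∘ₗ LinearMap.proj 0
  | t+1 => lsm X (bV k Q s i t) ∘ₗ phi s N σ i t + σ i (t+1) ∘ₗ LinearMap.proj (t+1)

variable {N N' : CRep k Q} {σ : ∀ i t, N.N i t →ₗ[k] X}

lemma phi_zero (i : Q.V) (f) : phi s N σ i 0 f = σ i 0 (f 0) := rfl
lemma phi_succ (i : Q.V) (t : ℕ) (f) :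
    phi s N σ i (t+1) f = bV k Q s i t • phi s N σ i t f + σ i (t+1) (f (t+1)) := rfl

lemma phi_e (hσ : IsAdj s N σ) (i : Q.V) (t : ℕ) (ht : t < s) (f) :
    eV k Q s i t • phi s N σ i t f = phi s N σ i t f := by
  cases t with
  | zero => exact hσ.he _ _ ht _
  | succ t => rw [phi_succ, smul_add, hσ.he _ _ ht, ← msmul, e_bV]

lemma phi_d (hσ : IsAdj s N σ) (a : Q.E) (t : ℕ) (ht : t + 1 < s) (f) :
    aV k Q s a t • phi s N σ (Q.src a) (t+1) f = phi s N σ (Q.tgt a) t (famD N a f) := by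
  induction t with
  | zero =>
    rw [phi_succ, smul_add, hσ.hd _ _ ht, ← msmul, mesh0_V, zero_smul, zero_add]
    rfl
  | succ t ih =>
    rw [phi_succ, smul_add, hσ.hd _ _ ht, ← msmul, mesh_V _ _ ht, msmul, ih (by omega), phi_succ]
    rfl

lemma phi_ext (i : Q.V) (t : ℕ) (f g : ∀ u, N.N i u) (h : ∀ u, u ≤ t → f u = g u) :
    phi s N σ i t f = phi s N σ i t g := by
  induction t with
  | zero => rw [phi_zero, phi_zero, h 0 le_rfl]
  | succ t ih => rw [phi_succ, phi_succ, ih (fun u hu => h u (by omega)), h _ le_rfl]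

/-- the underlying `k`-linear map of the adjoint -/
def Phi0 (s : ℕ) {X : Type} [AddCommGroup X] [Module k X] [Module (NsQ k Q s) X]
    [IsScalarTower k (NsQ k Q s) X]
    (N : CRep k Q) (σ : ∀ i t, N.N i t →ₗ[k] X) : FT s N →ₗ[k] X :=
  ∑ p : Q.V × Fin s, phi s N σ p.1 p.2 ∘ₗ (Fil N p.1 p.2).subtype ∘ₗ prj N p.1 p.2 p.2.2

lemma Phi0_apply (f : FT s N) : Phi0 s N σ f =
    ∑ p : Q.V × Fin s, phi s N σ p.1 p.2 (prj N p.1 p.2 p.2.2 f).1 := by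
  simp [Phi0]

lemma Phi0_ins (i : Q.V) (t : ℕ) (ht : t < s) (f) :
    Phi0 s N σ (ins N i t ht f) = phi s N σ i t f.1 := by
  rw [Phi0_apply, Finset.sum_eq_single (i, ⟨t, ht⟩)]
  · simp
  · rintro ⟨j, u⟩ _ hne
    rw [prj_ins_ne]
    · simp
    · simpa [Fin.ext_iff] using hne
  · simp

lemma mul_phi {r : NsQ k Q s} {i : Q.V} {t : ℕ} {ht : t < s} (hσ : IsAdj s N σ)
    (hr : r * eV k Q s i t = r) (f : FT s N) :
    r • Phi0 s N σ f = r • phi s N σ i t (prj N i t ht f).1 := by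
  rw [Phi0_apply, Finset.smul_sum, Finset.sum_eq_single (i, ⟨t, ht⟩)]
  · rintro ⟨j, u⟩ _ hne
    rw [← hr, msmul, ← phi_e hσ _ _ u.2, ← msmul (eV k Q s i t), eV_mul_ne, zero_smul, smul_zero]
    rintro ⟨rfl, h⟩
    exact hne (by simp [h])
  · simp

/-- the adjoint -/
def Phi (hσ : IsAdj s N σ) : FT s N →ₗ[NsQ k Q s] X :=
  mkLin3 (Phi0 s N σ)
    (by
      intro i t ht f
      rw [mul_phi hσ (eV_mul_self i t) (ht := ht), eV_smul_F N ht, Phi0_ins, phi_e hσ _ _ ht])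
    (by
      intro i t ht f
      rw [mul_phi hσ (bV_e i t) (ht := by omega), bV_smul_F N ht, Phi0_ins, phi_succ]
      have : (filB N i t (prj N i t (Nat.lt_of_succ_lt ht) f)).1 (t+1) = 0 :=
        (prj N i t (Nat.lt_of_succ_lt ht) f).2 _ (by omega)
      rw [this, map_zero, add_zero]
      rfl)
    (by
      intro a t ht f
      rw [mul_phi hσ (aV_e a t) (ht := ht), aV_smul_F N ht, Phi0_ins, phi_d hσ _ _ ht]
      rfl)

lemma Phi_apply (hσ : IsAdj s N σ) (f) : Phi hσ f =
    ∑ p : Q.V × Fin s, phi s N σ p.1 p.2 (prj N p.1 p.2 p.2.2 f).1 := Phi0_apply f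

lemma Phi_ins (hσ : IsAdj s N σ) (i : Q.V) (t : ℕ) (ht : t < s) (f) :
    Phi hσ (ins N i t ht f) = phi s N σ i t f.1 := Phi0_ins i t ht f

lemma e_Phi (hσ : IsAdj s N σ) (i : Q.V) (t : ℕ) (ht : t < s) (f : FT s N) :
    eV k Q s i t • Phi hσ f = phi s N σ i t (prj N i t ht f).1 := by
  rw [← phi_e hσ _ _ ht]
  exact mul_phi hσ (eV_mul_self i t) f

lemma phi_comp (h : X →ₗ[NsQ k Q s] Y) (τ : ∀ i t, N.N i t →ₗ[k] Y)
    (hτ : ∀ i t n, t < s → τ i t n = h (σ i t n)) (i : Q.V) (t : ℕ) (ht : t < s) (f) :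
    phi s N τ i t f = h (phi s N σ i t f) := by
  induction t with
  | zero => exact hτ _ _ _ ht
  | succ t ih => rw [phi_succ, phi_succ, ih (by omega), hτ _ _ _ ht, map_add, map_smul]

lemma Phi_comp (hσ : IsAdj s N σ) (h : X →ₗ[NsQ k Q s] Y) {τ : ∀ i t, N.N i t →ₗ[k] Y}
    (hτ' : IsAdj s N τ)
    (hτ : ∀ i t n, t < s → τ i t n = h (σ i t n)) (f) : Phi hτ' f = h (Phi hσ f) := by
  rw [Phi_apply, Phi_apply, map_sum]
  exact Finset.sum_congr rfl fun p _ => phi_comp h τ hτ _ _ p.2.2 _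

end Adj

/-- family map to linear map -/
def Tmap0 {N N' : CRep k Q} (h : ∀ i t, Fil N i t →ₗ[k] Fil N' i t) : FT s N →ₗ[k] FT s N' :=
  LinearMap.pi (φ := fun p : Q.V × Fin s => Fil N' p.1 p.2)
    (fun p => h p.1 p.2 ∘ₗ prj N p.1 p.2 p.2.2)

lemma prj_Tmap0 {N N' : CRep k Q} (h : ∀ i t, Fil N i t →ₗ[k] Fil N' i t) (i t) (ht : t < s) (f) :
    prj N' i t ht (Tmap0 h f) = h i t (prj N i t ht f) := rfl

lemma Tmap0_ins {N N' : CRep k Q} (h : ∀ i t, Fil N i t →ₗ[k] Fil N' i t) (i t) (ht : t < s) (f) :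
    Tmap0 h (ins N i t ht f) = ins N' i t ht (h i t f) := by
  apply FT_ext
  intro j u hu
  rw [prj_Tmap0]
  by_cases hh : j = i ∧ u = t
  · obtain ⟨rfl, rfl⟩ := hh
    simp
  · rw [prj_ins_ne _ hh, prj_ins_ne _ hh, map_zero]

def Tmap {N N' : CRep k Q} (h : ∀ i t, Fil N i t →ₗ[k] Fil N' i t)
    (hb : ∀ i t, t + 1 < s → ∀ f, h i (t+1) (filB N i t f) = filB N' i t (h i t f))
    (hd : ∀ a t, t + 1 < s → ∀ f, h _ t (filD N a t f) = filD N' a t (h _ (t+1) f)) :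
    FT s N →ₗ[NsQ k Q s] FT s N' :=
  mkLin3 (Tmap0 h)
    (by intro i t ht f; rw [eV_smul_F N ht, eV_smul_F N' ht, Tmap0_ins, prj_Tmap0])
    (by intro i t ht f; rw [bV_smul_F N ht, bV_smul_F N' ht, Tmap0_ins, prj_Tmap0, hb _ _ ht])
    (by intro i t ht f; rw [aV_smul_F N ht, aV_smul_F N' ht, Tmap0_ins, prj_Tmap0, hd _ _ ht])

lemma prj_Tmap {N N' : CRep k Q} (h : ∀ i t, Fil N i t →ₗ[k] Fil N' i t) (hb) (hd)
    (i t) (ht : t < s) (f) :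
    prj N' i t ht (Tmap h hb hd f) = h i t (prj N i t ht f) := rfl

/-- functoriality -/
def filMap {N N' : CRep k Q} (θ : ∀ i t, N.N i t →ₗ[k] N'.N i t) (i : Q.V) (t : ℕ) :
    Fil N i t →ₗ[k] Fil N' i t where
  toFun f := ⟨fun u => θ i u (f.1 u), fun u hu => by simp [f.2 u hu]⟩
  map_add' f g := by ext u; simp
  map_smul' c f := by ext u; simp

def Fmap {N N' : CRep k Q} (θ : ∀ i t, N.N i t →ₗ[k] N'.N i t)
    (hθ : ∀ a t n, θ _ t (N.d a t n) = N'.d a t (θ _ (t+1) n)) :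
    FT s N →ₗ[NsQ k Q s] FT s N' :=
  Tmap (filMap θ) (fun _ _ _ _ => rfl) (by
    intro a t _ f
    ext u
    exact hθ a u _)

lemma prj_Fmap {N N' : CRep k Q} (θ : ∀ i t, N.N i t →ₗ[k] N'.N i t) (hθ)
    (i t) (ht : t < s) (f) (u) :
    (prj N' i t ht (Fmap θ hθ f)).1 u = θ i u ((prj N i t ht f).1 u) := rfl

lemma phi_Fmap {X : Type} [AddCommGroup X] [Module k X] [Module (NsQ k Q s) X]
    [IsScalarTower k (NsQ k Q s) X] {N N' : CRep k Q} (θ : ∀ i t, N.N i t →ₗ[k] N'.N i t)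
    {σ : ∀ i t, N'.N i t →ₗ[k] X} {τ : ∀ i t, N.N i t →ₗ[k] X}
    (h : ∀ i t n, t < s → τ i t n = σ i t (θ i t n)) (i : Q.V) (t : ℕ) (ht : t < s) (f) :
    phi s N τ i t f = phi s N' σ i t (fun u => θ i u (f u)) := by
  induction t with
  | zero => exact h _ _ _ ht
  | succ t ih => rw [phi_succ, phi_succ, ih (by omega), h _ _ _ ht]

lemma Phi_Fmap {X : Type} [AddCommGroup X] [Module k X] [Module (NsQ k Q s) X]
    [IsScalarTower k (NsQ k Q s) X] {N N' : CRep k Q} (θ : ∀ i t, N.N i t →ₗ[k] N'.N i t) (hθ)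
    {σ : ∀ i t, N'.N i t →ₗ[k] X} {τ : ∀ i t, N.N i t →ₗ[k] X}
    (hσ : IsAdj s N' σ) (hτ : IsAdj s N τ)
    (h : ∀ i t n, t < s → τ i t n = σ i t (θ i t n)) (f) :
    Phi hσ (Fmap θ hθ f) = Phi hτ f := by
  rw [Phi_apply, Phi_apply]
  exact Finset.sum_congr rfl fun p _ => (phi_Fmap θ h _ _ p.2.2 _).symm

/-- single family -/
def fsingle (N : CRep k Q) (i : Q.V) (t : ℕ) : N.N i t →ₗ[k] Fil N i t where
  toFun n := ⟨Pi.single t n, fun u hu => Pi.single_eq_of_ne (by omega) _⟩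
  map_add' f g := by ext u; simp [Pi.single_add]
  map_smul' c f := by ext u; simp [Pi.single_smul]

/-- canonical map -/
def can (s : ℕ) (N : CRep k Q) (i : Q.V) (t : ℕ) : N.N i t →ₗ[k] FT s N :=
  if h : t < s then ins N i t h ∘ₗ fsingle N i t else 0

lemma can_of (N : CRep k Q) (i : Q.V) (t : ℕ) (h : t < s) (n) :
    can s N i t n = ins N i t h (fsingle N i t n) := by
  simp [can, h]

lemma can_adj (N : CRep k Q) : IsAdj s N (can s N) where
  he i t h n := by rw [can_of _ _ _ h, eV_smul_F N h, prj_ins]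
  hd a t h n := by
    rw [can_of _ _ _ h, can_of _ _ _ (Nat.lt_of_succ_lt h), aV_smul_F N h, prj_ins]
    congr 1
    ext u
    change N.d a u ((Pi.single (t+1) n : ∀ u, N.N (Q.src a) u) (u+1)) =
      (Pi.single t (N.d a t n) : ∀ u, N.N (Q.tgt a) u) u
    by_cases hu : u = t
    · subst hu; simp
    · rw [Pi.single_eq_of_ne hu, Pi.single_eq_of_ne (by omega), map_zero]

lemma phi_can (N : CRep k Q) (i : Q.V) (t : ℕ) (h : t < s) (f : ∀ u, N.N i u) :
    phi s N (can s N) i t f =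
      ins N i t h ⟨fun u => if u ≤ t then f u else 0, fun u hu => if_neg (by omega)⟩ := by
  induction t with
  | zero =>
    rw [phi_zero, can_of _ _ _ h]
    congr 1
    ext u
    change (Pi.single 0 (f 0) : ∀ u, N.N i u) u = if u ≤ 0 then f u else 0
    by_cases hu : u = 0
    · subst hu; simp
    · rw [Pi.single_eq_of_ne hu, if_neg (by omega)]
  | succ t ih =>
    rw [phi_succ, can_of _ _ _ h, ih (by omega), bV_smul_F N h, prj_ins, ← map_add]
    congr 1
    ext u
    change (if u ≤ t then f u else 0) + (Pi.single (t+1) (f (t+1)) : ∀ u, N.N i u) u =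
      if u ≤ t + 1 then f u else 0
    by_cases hu : u = t + 1
    · subst hu; simp
    · rw [Pi.single_eq_of_ne hu, add_zero]
      by_cases h3 : u ≤ t
      · rw [if_pos h3, if_pos (by omega)]
      · rw [if_neg h3, if_neg (by omega)]

lemma Phi_can (N : CRep k Q) (f : FT s N) : Phi (can_adj N) f = f := by
  rw [Phi_apply]
  conv_rhs => rw [← sum_ins_prj N f]
  refine Finset.sum_congr rfl fun p _ => ?_
  rw [phi_can _ _ _ p.2.2]
  congr 1
  ext u
  by_cases hu : u ≤ p.2
  · exact if_pos hu
  · exact (if_neg hu).trans ((prj N p.1 p.2 p.2.2 f).2 u (by omega)).symm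

section Res
variable {X Y : Type} [AddCommGroup X] [Module k X] [Module (NsQ k Q s) X]
  [IsScalarTower k (NsQ k Q s) X] [AddCommGroup Y] [Module k Y] [Module (NsQ k Q s) Y]
  [IsScalarTower k (NsQ k Q s) Y]

lemma phi_single {N : CRep k Q} {σ : ∀ i t, N.N i t →ₗ[k] X} (i : Q.V) (t : ℕ) (n) :
    phi s N σ i t (fsingle N i t n).1 = σ i t n := by
  cases t with
  | zero => exact congrArg (σ i 0) (Pi.single_eq_same (M := fun u => N.N i u) 0 n)
  | succ t =>
    rw [phi_succ, phi_ext i t _ 0, map_zero, smul_zero, zero_add]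
    · congr 1; exact Pi.single_eq_same _ _
    · intro u hu
      exact Pi.single_eq_of_ne (by omega) _

lemma Phi_surj {N : CRep k Q} {σ : ∀ i t, N.N i t →ₗ[k] X} (hσ : IsAdj s N σ) (x : X)
    (h : ∀ i t, t < s → ∃ n, σ i t n = eV k Q s i t • x) : ∃ f, Phi hσ f = x := by
  choose n hn using h
  refine ⟨∑ p : Q.V × Fin s, ins N p.1 p.2 p.2.2 (fsingle N p.1 p.2 (n p.1 p.2 p.2.2)), ?_⟩
  rw [map_sum]
  simp only [Phi_ins, phi_single, hn]
  rw [← Finset.sum_smul, sum_eV, one_smul]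

/-- constant representation attached to a module -/
def constRep (Y : Type) [AddCommGroup Y] [Module k Y] [Module (NsQ k Q s) Y]
    [IsScalarTower k (NsQ k Q s) Y] : CRep k Q where
  N _ _ := Y
  d a t := lsm Y (aV k Q s a t)

def constσ (Y : Type) [AddCommGroup Y] [Module k Y] [Module (NsQ k Q s) Y]
    [IsScalarTower k (NsQ k Q s) Y] :
    ∀ i t, (constRep (k := k) (Q := Q) (s := s) Y).N i t →ₗ[k] Y :=
  fun i t => (show Y →ₗ[k] Y from lsm Y (eV k Q s i t))

lemma const_adj : IsAdj s (constRep (k := k) (Q := Q) (s := s) Y)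
    (constσ (k := k) (Q := Q) (s := s) Y) where
  he i t _ := fun (y : Y) => by
    change eV k Q s i t • eV k Q s i t • (y : Y) = eV k Q s i t • (y : Y)
    rw [← msmul, eV_mul_self]
  hd a t _ := fun (y : Y) => by
    change aV k Q s a t • eV k Q s _ _ • (y : Y) = eV k Q s _ t • aV k Q s a t • (y : Y)
    rw [← msmul, ← msmul, e_aV, aV_e]

/-- Induced modules have projective dimension at most one. -/
lemma pd1 (N : CRep k Q) {P : Type} [AddCommGroup P] [Module k P] [Module (NsQ k Q s) P]
    [IsScalarTower k (NsQ k Q s) P] [Module.Projective (NsQ k Q s) P]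
    (π : P →ₗ[NsQ k Q s] FT s N) (hπ : Function.Surjective π) :
    Module.Projective (NsQ k Q s) (LinearMap.ker π) := by
  set K := LinearMap.ker π with hK
  let Y : Type := K →₀ NsQ k Q s
  let g : Y →ₗ[NsQ k Q s] K := Finsupp.linearCombination (NsQ k Q s) id
  have hg : Function.Surjective g := Finsupp.linearCombination_id_surjective _ _
  obtain ⟨ρ0, hρ0⟩ := LinearMap.exists_rightInverse_of_surjective (g.restrictScalars k)
    (LinearMap.range_eq_top.2 hg)
  obtain ⟨r, hr⟩ := LinearMap.exists_leftInverse_of_injective (K.subtype.restrictScalars k)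
    (LinearMap.ker_eq_bot.2 (Subtype.val_injective))
  obtain ⟨τ, hτ⟩ := LinearMap.exists_rightInverse_of_surjective (π.restrictScalars k)
    (LinearMap.range_eq_top.2 hπ)
  let ρ : P →ₗ[k] Y := ρ0 ∘ₗ r
  have hρ : ∀ p ∈ K, (g (ρ p) : P) = p := by
    intro p hp
    have h1 : r p = ⟨p, hp⟩ := LinearMap.congr_fun hr ⟨p, hp⟩
    have h2 : g (ρ0 (r p)) = r p := LinearMap.congr_fun hρ0 (r p)
    change (g (ρ0 (r p)) : P) = p
    rw [h2, h1]
  have hτ' : ∀ f, π (τ f) = f := fun f => LinearMap.congr_fun hτ f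
  let σ0 : ∀ i t, N.N i t →ₗ[k] P := fun i t => lsm P (eV k Q s i t) ∘ₗ τ ∘ₗ can s N i t
  have hσ0 : ∀ i t n, t < s → π (σ0 i t n) = can s N i t n := by
    intro i t n ht
    change π (eV k Q s i t • τ (can s N i t n)) = _
    rw [map_smul, hτ', (can_adj N).he _ _ ht]
  have h_sec_e : ∀ i t n, eV k Q s i t • σ0 i t n = σ0 i t n := by
    intro i t n
    change eV k Q s i t • eV k Q s i t • τ (can s N i t n) = eV k Q s i t • τ (can s N i t n)
    rw [← msmul, eV_mul_self]
  let c : ∀ a t, N.N (Q.src a) (t+1) →ₗ[k] P := fun a t =>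
    lsm P (aV k Q s a t) ∘ₗ σ0 (Q.src a) (t+1) - σ0 (Q.tgt a) t ∘ₗ N.d a t
  have hc : ∀ a t n, c a t n = aV k Q s a t • σ0 _ (t+1) n - σ0 _ t (N.d a t n) :=
    fun _ _ _ => rfl
  have hcK : ∀ a t, t + 1 < s → ∀ n, c a t n ∈ K := by
    intro a t ht n
    rw [hK, LinearMap.mem_ker, hc, map_sub, map_smul, hσ0 _ _ _ ht, hσ0 _ _ _ (by omega),
      (can_adj N).hd _ _ ht, sub_self]
  have hce : ∀ a t n, eV k Q s (Q.tgt a) t • c a t n = c a t n := by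
    intro a t n
    rw [hc, smul_sub, h_sec_e, ← msmul, e_aV]
  let ct : ∀ a t, N.N (Q.src a) (t+1) →ₗ[k] Y := fun a t =>
    lsm Y (eV k Q s (Q.tgt a) t) ∘ₗ ρ ∘ₗ c a t
  have hct : ∀ a t, t + 1 < s → ∀ n, (g (ct a t n) : P) = c a t n := by
    intro a t ht n
    change (g (eV k Q s (Q.tgt a) t • ρ (c a t n)) : P) = _
    rw [map_smul, Submodule.coe_smul, hρ _ (hcK a t ht n), hce]
  let NY : CRep k Q :=
    { N := fun i t => N.N i t × Y
      d := fun a t => (N.d a t ∘ₗ LinearMap.fst k _ _).prod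
        (lsm Y (aV k Q s a t) ∘ₗ LinearMap.snd k _ _ + ct a t ∘ₗ LinearMap.fst k _ _) }
  let gP : Y →ₗ[NsQ k Q s] P := K.subtype ∘ₗ g
  let σ : ∀ i t, NY.N i t →ₗ[k] P := fun i t =>
    σ0 i t ∘ₗ LinearMap.fst k _ _ +
      lsm P (eV k Q s i t) ∘ₗ gP.restrictScalars k ∘ₗ LinearMap.snd k _ _
  have hσv : ∀ i t (n : N.N i t) (y : Y), σ i t (n, y) = σ0 i t n + eV k Q s i t • gP y :=
    fun _ _ _ _ => rfl
  have hσ : IsAdj s NY σ :=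
    { he := by
        rintro i t ht ⟨n, y⟩
        rw [hσv, smul_add, h_sec_e, ← msmul, eV_mul_self]
      hd := by
        rintro a t ht ⟨n, y⟩
        have h1 : NY.d a t (n, y) = (N.d a t n, aV k Q s a t • y + ct a t n) := rfl
        rw [h1, hσv, hσv, map_add, map_smul]
        have h2 : gP (ct a t n) = c a t n := hct a t ht n
        rw [h2, smul_add, smul_add, hce, ← msmul, ← msmul, aV_e, e_aV, hc]
        abel }
  let pr : ∀ i t, NY.N i t →ₗ[k] N.N i t := fun i t => LinearMap.fst k _ _
  let inc : ∀ i t, (constRep (k := k) (Q := Q) (s := s) Y).N i t →ₗ[k] NY.N i t :=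
    fun i t => LinearMap.inr k _ _
  have hpr : ∀ a t n, pr _ t (NY.d a t n) = N.d a t (pr _ (t+1) n) := fun _ _ _ => rfl
  have hinc : ∀ a t n, inc _ t ((constRep (k := k) (Q := Q) (s := s) Y).d a t n) =
      NY.d a t (inc _ (t+1) n) := by
    intro a t
    refine fun (y : Y) => ?_
    have h1 : NY.d a t ((0 : N.N (Q.src a) (t+1)), (y : Y)) =
      (N.d a t 0, aV k Q s a t • (y : Y) + ct a t 0) := rfl
    change ((0 : N.N (Q.tgt a) t), aV k Q s a t • (y : Y)) = NY.d a t (0, y)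
    rw [h1, map_zero, map_zero, add_zero]
  let Fpr : FT s NY →ₗ[NsQ k Q s] FT s N := Fmap pr hpr
  let Finc : FT s (constRep (k := k) (Q := Q) (s := s) Y) →ₗ[NsQ k Q s] FT s NY := Fmap inc hinc
  have key1 : ∀ f, π (Phi hσ f) = Fpr f := by
    intro f
    have hτ1 : IsAdj s NY (fun i t => can s N i t ∘ₗ pr i t) :=
      { he := fun i t ht n => (can_adj N).he i t ht _
        hd := fun a t ht n => (can_adj N).hd a t ht _ }
    rw [← Phi_can N (Fpr f), Phi_Fmap pr hpr (can_adj N) hτ1 (fun _ _ _ _ => rfl)]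
    symm
    refine Phi_comp hσ π hτ1 ?_ f
    rintro i t ⟨n, y⟩ ht
    have h3 : π (gP y) = 0 := (g y).2
    rw [hσv, map_add, map_smul, h3, smul_zero, add_zero, hσ0 _ _ _ ht]
    rfl
  have key2 : ∀ w, Phi hσ (Finc w) = gP (Phi const_adj w) := by
    intro w
    have hτ1 : IsAdj s (constRep (k := k) (Q := Q) (s := s) Y) (fun i t => σ i t ∘ₗ inc i t) :=
      { he := fun i t ht n => hσ.he i t ht _
        hd := fun a t ht n => by
          change _ = σ _ _ (inc _ _ _)
          rw [hinc]
          exact hσ.hd a t ht _ }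
    have : Phi hσ (Finc w) = Phi hτ1 w := Phi_Fmap inc hinc hσ hτ1 (fun _ _ _ _ => rfl) w
    rw [this]
    refine Phi_comp const_adj gP hτ1 ?_ w
    intro i t
    refine fun (y : Y) ht => ?_
    change σ i t (0, y) = gP (eV k Q s i t • (y : Y))
    rw [hσv, map_zero, zero_add, map_smul]
  have aug_surj : ∀ y : Y, ∃ w, Phi (const_adj (k := k) (Q := Q) (s := s) (Y := Y)) w = y :=
    fun y => Phi_surj const_adj y fun i t _ => ⟨y, rfl⟩
  have Fpr_surj : Function.Surjective Fpr := by
    intro f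
    refine ⟨fun p => ⟨fun u => ((f p).1 u, 0), fun u hu => ?_⟩, ?_⟩
    · change (((f p).1 u, 0) : N.N p.1 u × Y) = 0
      rw [(f p).2 u hu]; rfl
    · rfl
  have Phi_surj' : Function.Surjective (Phi hσ) := by
    intro p
    obtain ⟨f, hf⟩ := Fpr_surj (π p)
    have h1 : p - Phi hσ f ∈ K := by
      rw [hK, LinearMap.mem_ker, map_sub, key1, hf, sub_self]
    obtain ⟨y, hy⟩ := hg ⟨_, h1⟩
    obtain ⟨w, rfl⟩ := aug_surj y
    refine ⟨f + Finc w, ?_⟩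
    rw [map_add, key2]
    change Phi hσ f + ((g (Phi const_adj w) : K) : P) = p
    rw [hy]
    simp
  obtain ⟨sec, hsec⟩ := Module.projective_lifting_property (Phi hσ) LinearMap.id Phi_surj'
  have hsec' : ∀ p, Phi hσ (sec p) = p := fun p => LinearMap.congr_fun hsec p
  have Finc_inj : Function.Injective Finc := by
    intro w w' h
    apply FT_ext
    intro i t ht
    ext u
    have h2 : (prj NY i t ht (Finc w)).1 u = (prj NY i t ht (Finc w')).1 u := by rw [h]
    exact congrArg Prod.snd h2
  have hker : ∀ f, Fpr f = 0 → f ∈ LinearMap.range Finc := by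
    intro f hf
    refine ⟨fun p => ⟨fun u => ((f p).1 u).2, fun u hu => ?_⟩, ?_⟩
    · exact congrArg Prod.snd ((f p).2 u hu)
    · apply FT_ext
      intro i t ht
      apply Subtype.ext
      funext u
      have h2 : (prj N i t ht (Fpr f)).1 u = 0 := by rw [hf]; rfl
      have h3 : ((prj NY i t ht f).1 u).1 = 0 := h2
      refine Prod.ext ?_ ?_
      · exact h3.symm
      · rfl
  let back : LinearMap.range Finc →ₗ[NsQ k Q s] FT s (constRep (k := k) (Q := Q) (s := s) Y) :=
    (LinearEquiv.ofInjective Finc Finc_inj).symm.toLinearMap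
  have hback : ∀ x, Finc (back x) = x := fun x =>
    congrArg Subtype.val ((LinearEquiv.ofInjective Finc Finc_inj).apply_symm_apply x)
  let m : K →ₗ[NsQ k Q s] LinearMap.range Finc :=
    LinearMap.codRestrict _ (sec ∘ₗ K.subtype) (fun κ => hker _ (by
      rw [← key1, LinearMap.comp_apply, hsec']
      exact κ.2))
  have : Module.Projective (NsQ k Q s) Y := inferInstanceAs (Module.Projective _ (K →₀ _))
  refine Module.Projective.of_split ((Phi const_adj) ∘ₗ back ∘ₗ m) g ?_
  ext κ
  change gP (Phi const_adj (back (m κ))) = κ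
  rw [← key2, hback]
  exact hsec' _

/-- layers of a module -/
def Lay (X : Type) [AddCommGroup X] [Module k X] [Module (NsQ k Q s) X]
    [IsScalarTower k (NsQ k Q s) X] (i : Q.V) (t : ℕ) : Submodule k X :=
  LinearMap.ker (lsm X (eV k Q s i t) - LinearMap.id)

lemma mem_Lay {i : Q.V} {t : ℕ} {x : X} :
    x ∈ Lay (k := k) (Q := Q) (s := s) X i t ↔ eV k Q s i t • x = x := by
  simp [Lay, sub_eq_zero]

/-- shifted layers -/
def Sh (X : Type) [AddCommGroup X] [Module k X] [Module (NsQ k Q s) X]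
    [IsScalarTower k (NsQ k Q s) X] (i : Q.V) : ℕ → Submodule k X
  | 0 => ⊥
  | t+1 => Lay (k := k) (Q := Q) (s := s) X i t

def opA (a : Q.E) : ℕ → NsQ k Q s
  | 0 => 0
  | t+1 => aV k Q s a t

def opB (i : Q.V) : ℕ → NsQ k Q s
  | 0 => 0
  | t+1 => bV k Q s i t

def layRep (X : Type) [AddCommGroup X] [Module k X] [Module (NsQ k Q s) X]
    [IsScalarTower k (NsQ k Q s) X] : CRep k Q where
  N i t := Lay (k := k) (Q := Q) (s := s) X i t
  d a t := (lsm X (aV k Q s a t)).restrict (by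
    intro x _
    rw [mem_Lay, lsm_apply, ← msmul, e_aV])

def shRep (X : Type) [AddCommGroup X] [Module k X] [Module (NsQ k Q s) X]
    [IsScalarTower k (NsQ k Q s) X] : CRep k Q where
  N i t := Sh (k := k) (Q := Q) (s := s) X i t
  d a t := (lsm X (opA (k := k) (s := s) a t)).restrict (by
    intro x _
    cases t with
    | zero => simp [opA]
    | succ t =>
      change _ ∈ Lay X _ _
      rw [mem_Lay, lsm_apply, ← msmul, opA, e_aV])

def layσ (X : Type) [AddCommGroup X] [Module k X] [Module (NsQ k Q s) X]
    [IsScalarTower k (NsQ k Q s) X] :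
    ∀ i t, (layRep (k := k) (Q := Q) (s := s) X).N i t →ₗ[k] X :=
  fun i t => (Lay (k := k) (Q := Q) (s := s) X i t).subtype

lemma lay_adj : IsAdj s (layRep (k := k) (Q := Q) (s := s) X) (layσ X) where
  he _ _ _ n := mem_Lay.1 n.2
  hd _ _ _ _ := rfl

/-- the map `1 - b` -/
def jFil (X : Type) [AddCommGroup X] [Module k X] [Module (NsQ k Q s) X]
    [IsScalarTower k (NsQ k Q s) X] (i : Q.V) (t : ℕ) :
    Fil (shRep (k := k) (Q := Q) (s := s) X) i t →ₗ[k]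
      Fil (layRep (k := k) (Q := Q) (s := s) X) i t where
  toFun f := ⟨fun u => ⟨(f.1 (u+1)).1 - (opB i u : NsQ k Q s) • (f.1 u).1, by
      have h1 : eV k Q s i u • (f.1 (u+1)).1 = (f.1 (u+1)).1 := mem_Lay.1 (f.1 (u+1)).2
      have h2 : eV k Q s i u * opB i u = opB i u := by
        cases u with
        | zero => simp [opB]
        | succ u => exact e_bV _ _
      rw [mem_Lay, smul_sub, h1, ← msmul, h2]⟩, by
    intro u hu
    apply Subtype.ext
    change (f.1 (u+1)).1 - (opB i u : NsQ k Q s) • (f.1 u).1 = 0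
    rw [f.2 u hu, f.2 (u+1) (by omega)]
    change (0 : X) - (opB i u : NsQ k Q s) • (0 : X) = 0
    rw [smul_zero, sub_zero]⟩
  map_add' f g := by
    apply Subtype.ext
    funext u
    apply Subtype.ext
    change ((f.1 (u+1)).1 + (g.1 (u+1)).1) - (opB i u : NsQ k Q s) • ((f.1 u).1 + (g.1 u).1) =
      ((f.1 (u+1)).1 - (opB i u : NsQ k Q s) • (f.1 u).1) +
      ((g.1 (u+1)).1 - (opB i u : NsQ k Q s) • (g.1 u).1)
    rw [smul_add]; abel
  map_smul' c f := by
    apply Subtype.ext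
    funext u
    apply Subtype.ext
    change (c • (f.1 (u+1)).1) - (opB i u : NsQ k Q s) • (c • (f.1 u).1) =
      c • ((f.1 (u+1)).1 - (opB i u : NsQ k Q s) • (f.1 u).1)
    rw [smul_sub]
    congr 1
    exact map_smul (lsm X (opB i u : NsQ k Q s)) c _

lemma jFil_apply (i : Q.V) (t : ℕ) (f) (u) : ((jFil (k := k) (Q := Q) (s := s) X i t f).1 u).1 =
    (f.1 (u+1)).1 - (opB i u : NsQ k Q s) • (f.1 u).1 := rfl

def jmap (X : Type) [AddCommGroup X] [Module k X] [Module (NsQ k Q s) X]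
    [IsScalarTower k (NsQ k Q s) X] :
    FT s (shRep (k := k) (Q := Q) (s := s) X) →ₗ[NsQ k Q s]
      FT s (layRep (k := k) (Q := Q) (s := s) X) :=
  Tmap (jFil X) (fun _ _ _ _ => rfl) (by
    intro a t ht f
    apply Subtype.ext
    funext u
    apply Subtype.ext
    change (opA a (u+1) : NsQ k Q s) • (f.1 (u+1+1)).1 -
        (opB (Q.tgt a) u : NsQ k Q s) • (opA a u : NsQ k Q s) • (f.1 (u+1)).1 =
      aV k Q s a u • ((f.1 (u+1+1)).1 - (opB (Q.src a) (u+1) : NsQ k Q s) • (f.1 (u+1)).1)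
    rw [smul_sub]
    congr 1
    cases u with
    | zero =>
      rw [opB, opB, ← msmul (aV k Q s a 0), mesh0_V, zero_smul, zero_smul]
    | succ u =>
      by_cases hu : u + 2 < s
      · rw [opB, opB, opA, ← msmul, ← msmul, mesh_V _ _ hu]
      · rw [f.2 (u+1+1) (by omega)]
        change _ • _ • (0 : X) = _ • _ • (0 : X)
        simp only [smul_zero])

lemma jmap_inj : Function.Injective (jmap (k := k) (Q := Q) (s := s) X) := by
  rw [injective_iff_map_eq_zero]
  intro f hf
  apply FT_ext
  intro i t ht
  have h1 : jFil X i t (prj _ i t ht f) = 0 := by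
    have : prj _ i t ht (jmap X f) = 0 := by rw [hf, map_zero]
    exact this
  set x := prj _ i t ht f
  have h2 : ∀ u, (x.1 u).1 = 0 := by
    intro u
    induction u with
    | zero => exact (Submodule.mem_bot k).1 (x.1 0).2
    | succ u ih =>
      have h3 := jFil_apply (X := X) i t x u
      rw [h1, ih, smul_zero, sub_zero] at h3
      exact h3.symm
  rw [map_zero]
  apply Subtype.ext
  funext u
  apply Subtype.ext
  exact h2 u

lemma phi_j (i : Q.V) (t : ℕ) (x : Fil (shRep (k := k) (Q := Q) (s := s) X) i t) (u : ℕ) :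
    phi s _ (layσ (k := k) (Q := Q) (s := s) X) i u (jFil X i t x).1 = (x.1 (u+1)).1 := by
  induction u with
  | zero =>
    rw [phi_zero]
    change (x.1 1).1 - (0 : NsQ k Q s) • (x.1 0).1 = _
    rw [zero_smul, sub_zero]
  | succ u ih =>
    rw [phi_succ, ih]
    change bV k Q s i u • (x.1 (u+1)).1 + ((x.1 (u+1+1)).1 - bV k Q s i u • (x.1 (u+1)).1) = _
    abel

lemma phi_beyond (i : Q.V) (t : ℕ) (x : Fil (layRep (k := k) (Q := Q) (s := s) X) i t)
    (h : phi s _ (layσ (k := k) (Q := Q) (s := s) X) i t x.1 = 0) (u : ℕ) (hu : t ≤ u) :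
    phi s _ (layσ (k := k) (Q := Q) (s := s) X) i u x.1 = 0 := by
  induction u, hu using Nat.le_induction with
  | base => exact h
  | succ u hu ih => rw [phi_succ, ih, smul_zero, zero_add, x.2 (u+1) (by omega), map_zero]

lemma phi_lay (i : Q.V) (t : ℕ) (x : ∀ u, (layRep (k := k) (Q := Q) (s := s) X).N i u) :
    phi s _ (layσ (k := k) (Q := Q) (s := s) X) i t x ∈
      Lay (k := k) (Q := Q) (s := s) X i t := by
  rw [mem_Lay]
  cases t with
  | zero => exact mem_Lay.1 (x 0).2
  | succ t =>
    have h : eV k Q s i (t+1) • (x (t+1)).1 = (x (t+1)).1 := mem_Lay.1 (x (t+1)).2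
    rw [phi_succ, smul_add, ← msmul, e_bV]
    congr 1

/-- preimage under `j` -/
def preJ (i : Q.V) (x : ∀ u, (layRep (k := k) (Q := Q) (s := s) X).N i u) :
    ∀ u, (shRep (k := k) (Q := Q) (s := s) X).N i u
  | 0 => (0 : Sh (k := k) (Q := Q) (s := s) X i 0)
  | u+1 => (⟨phi s _ (layσ (k := k) (Q := Q) (s := s) X) i u x, phi_lay i u x⟩ :
      Lay (k := k) (Q := Q) (s := s) X i u)

lemma exact_j : Function.Exact (jmap (k := k) (Q := Q) (s := s) X) (Phi (lay_adj (X := X))) := by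
  intro f
  constructor
  · intro hf
    have h0 : ∀ i t (ht : t < s), phi s _ (layσ (k := k) (Q := Q) (s := s) X) i t
        (prj _ i t ht f).1 = 0 := by
      intro i t ht
      rw [← e_Phi lay_adj, hf, smul_zero]
    refine ⟨fun p => ⟨preJ p.1 (prj _ p.1 p.2 p.2.2 f).1, ?_⟩, ?_⟩
    · intro u hu
      cases u with
      | zero => rfl
      | succ u =>
        apply Subtype.ext
        exact phi_beyond _ _ _ (h0 _ _ _) u (by omega)
    · apply FT_ext
      intro i t ht
      apply Subtype.ext
      funext u
      apply Subtype.ext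
      change (preJ i (prj _ i t ht f).1 (u+1)).1 -
        (opB i u : NsQ k Q s) • (preJ i (prj _ i t ht f).1 u).1 = ((prj _ i t ht f).1 u).1
      cases u with
      | zero =>
        change ((prj _ i t ht f).1 0).1 - (opB i 0 : NsQ k Q s) • (0 : X) = _
        rw [smul_zero, sub_zero]
      | succ u =>
        change phi s _ (layσ (k := k) (Q := Q) (s := s) X) i (u+1) _ -
          bV k Q s i u • phi s _ (layσ (k := k) (Q := Q) (s := s) X) i u _ = _
        rw [phi_succ, add_sub_cancel_left]
        rfl
  · rintro ⟨w, rfl⟩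
    rw [Phi_apply]
    refine Finset.sum_eq_zero fun p _ => ?_
    have h1 := phi_j p.1 p.2 (prj _ p.1 p.2 p.2.2 w) p.2
    have h2 : ((prj _ p.1 p.2 p.2.2 w).1 (p.2 + 1)).1 = 0 := by
      rw [(prj _ p.1 p.2 p.2.2 w).2 (p.2+1) (by omega)]; rfl
    rw [h2] at h1
    exact h1

lemma lay_surj : Function.Surjective (Phi (lay_adj (k := k) (Q := Q) (s := s) (X := X))) := by
  intro x
  refine Phi_surj lay_adj x fun i t _ => ⟨⟨eV k Q s i t • x, ?_⟩, rfl⟩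
  rw [mem_Lay, ← msmul, eV_mul_self]

end Res


/-- The negative of a linear map, over a semiring. -/
def negMap {R X Y : Type} [Semiring R] [AddCommGroup X] [AddCommGroup Y] [Module R X] [Module R Y]
    (f : X →ₗ[R] Y) : X →ₗ[R] Y where
  toFun x := f (-x)
  map_add' x y := by rw [neg_add, map_add]
  map_smul' r x := by
    have h : -(r • x) = r • (-x) := by
      rw [neg_eq_iff_add_eq_zero, ← smul_add, add_neg_cancel, smul_zero]
    rw [h, map_smul, RingHom.id_apply]

end NsProof

end Proof

/-- Let `Q` be a finite quiver, `s` a positive integer, and `N_s(Q)` the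
nilpotent quiver algebra over a field `k`.  Then the global dimension of `N_s(Q)` is at
most `2`: every left `N_s(Q)`-module admits a projective resolution of length at most `2`. -/
theorem nsq_global_dimension_le_two (k : Type) [Field k] (Q : FinQuiver) (s : ℕ) (hs : 0 < s)
    (M : Type) [AddCommGroup M] [Module (NsQ k Q s) M] :
    ∃ (P₀ P₁ P₂ : Type) (_ : AddCommGroup P₀) (_ : AddCommGroup P₁) (_ : AddCommGroup P₂)
      (_ : Module (NsQ k Q s) P₀) (_ : Module (NsQ k Q s) P₁) (_ : Module (NsQ k Q s) P₂)
      (f₂ : P₂ →ₗ[NsQ k Q s] P₁) (f₁ : P₁ →ₗ[NsQ k Q s] P₀) (f₀ : P₀ →ₗ[NsQ k Q s] M),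
      Module.Projective (NsQ k Q s) P₀ ∧ Module.Projective (NsQ k Q s) P₁ ∧
      Module.Projective (NsQ k Q s) P₂ ∧
      Function.Injective f₂ ∧ Function.Exact f₂ f₁ ∧ Function.Exact f₁ f₀ ∧
      Function.Surjective f₀ := by
  classical
  letI : Module k M := Module.compHom M (algebraMap k (NsQ k Q s))
  haveI : IsScalarTower k (NsQ k Q s) M := IsScalarTower.of_algebraMap_smul fun _ _ => rfl
  let aug := NsProof.Phi (NsProof.lay_adj (k := k) (Q := Q) (s := s) (X := M))
  have haug : Function.Surjective aug := NsProof.lay_surj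
  let F0 := NsProof.FT s (NsProof.layRep (k := k) (Q := Q) (s := s) M)
  let F1 := NsProof.FT s (NsProof.shRep (k := k) (Q := Q) (s := s) M)
  let j : F1 →ₗ[NsQ k Q s] F0 := NsProof.jmap M
  have hj : Function.Injective j := NsProof.jmap_inj
  have hex : Function.Exact j aug := NsProof.exact_j
  let π : (F0 →₀ NsQ k Q s) →ₗ[NsQ k Q s] F0 := Finsupp.linearCombination (NsQ k Q s) id
  let π' : (F1 →₀ NsQ k Q s) →ₗ[NsQ k Q s] F1 := Finsupp.linearCombination (NsQ k Q s) id
  have hπ : Function.Surjective π := Finsupp.linearCombination_id_surjective _ _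
  have hπ' : Function.Surjective π' := Finsupp.linearCombination_id_surjective _ _
  haveI hK : Module.Projective (NsQ k Q s) (LinearMap.ker π) := NsProof.pd1 _ π hπ
  haveI hK' : Module.Projective (NsQ k Q s) (LinearMap.ker π') := NsProof.pd1 _ π' hπ'
  obtain ⟨l, hl⟩ := Module.projective_lifting_property π (j ∘ₗ π') hπ
  have hl' : ∀ p, π (l p) = j (π' p) := fun p => LinearMap.congr_fun hl p
  let lK : LinearMap.ker π' →ₗ[NsQ k Q s] LinearMap.ker π :=
    LinearMap.codRestrict _ (l ∘ₗ (LinearMap.ker π').subtype) (fun κ => by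
      have h1 : π' κ.1 = 0 := κ.2
      rw [LinearMap.mem_ker, LinearMap.comp_apply, hl', Submodule.subtype_apply, h1, map_zero])
  have hlK : ∀ κ, (lK κ : F0 →₀ NsQ k Q s) = l κ := fun _ => rfl
  let f₁ : (LinearMap.ker π × (F1 →₀ NsQ k Q s)) →ₗ[NsQ k Q s] (F0 →₀ NsQ k Q s) :=
    (LinearMap.ker π).subtype.coprod l
  have hf₁ : ∀ κ p, f₁ (κ, p) = κ.1 + l p := fun κ p => LinearMap.coprod_apply _ _ _
  refine ⟨F0 →₀ NsQ k Q s, LinearMap.ker π × (F1 →₀ NsQ k Q s), LinearMap.ker π',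
    inferInstance, inferInstance, inferInstance, inferInstance, inferInstance, inferInstance,
    (NsProof.negMap lK).prod (LinearMap.ker π').subtype, f₁, aug ∘ₗ π,
    inferInstance, inferInstance, hK', ?_, ?_, ?_, haug.comp hπ⟩
  · intro x y h
    exact Subtype.ext (congrArg Prod.snd h)
  · rintro ⟨κ, p⟩
    constructor
    · intro h
      rw [hf₁] at h
      have h1 : π κ.1 = 0 := κ.2
      have h2 : π' p = 0 := by
        apply hj
        rw [← hl', map_zero]
        have := congrArg π h
        rwa [map_add, h1, zero_add, map_zero] at this
      refine ⟨⟨p, h2⟩, Prod.ext (Subtype.ext ?_) rfl⟩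
      change l (-p) = κ.1
      rw [map_neg]
      exact (eq_neg_of_add_eq_zero_left h).symm
    · rintro ⟨x, hx⟩
      rw [← hx]
      change f₁ (lK (-x), x.1) = 0
      rw [hf₁]
      change l (-x.1) + l x.1 = 0
      rw [map_neg]
      exact neg_add_cancel _
  · intro p
    constructor
    · intro h
      obtain ⟨w, hw⟩ := (hex (π p)).1 h
      obtain ⟨p', rfl⟩ := hπ' w
      refine ⟨(⟨p - l p', ?_⟩, p'), ?_⟩
      · rw [LinearMap.mem_ker, map_sub, hl', hw, sub_self]
      · rw [hf₁]
        exact sub_add_cancel _ _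
    · rintro ⟨⟨κ, p'⟩, rfl⟩
      have h1 : π κ.1 = 0 := κ.2
      rw [hf₁, LinearMap.comp_apply, map_add, h1, zero_add, hl']
      exact (hex _).2 ⟨_, rfl⟩
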